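/- Let n ≥ 3 be an integer and set d := n − 1. Let 1 ≤ p ≤ 2, 2 ≤ Q ≤ ∞, 1 ≤ r ≤ ∞, and assume n − 3 + 2/Q > 0. For slice-Schwartz functions f, g : ℝ^d × (0,∞) → ℂ define the remainder R(f, g)(x, t) := ∑_{k,ℓ ∈ ℤ, |k−ℓ| ≤ 2} (Δ_k f(·,t))(x) · (Δ_ℓ g(·,t))(x). Then there exists a constant C = C(n, p, Q, r) > 0 such that ‖R(f, g)‖_{L̃^{Q/2}(Ḃ^{n−3+2/Q}_{1, r})} ≤ C ‖f‖_{L̃^{Q}(Ḃ^{(n−1)/p + 1/Q − 1}_{p,r})} ‖g‖_{L̃^{Q}(Ḃ^{(n−1)/p + 1/Q − 1}_{p,r})} for all slice-Schwartz f, g. -/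

import Mathlib

/-!
The exponents are `d = n - 1`, `s = n - 3 + 2 / Q > 0` and `σ = d / p + 1 / Q - 1`, so that
`2 σ - 2 d (1 / p - 1 / 2) = s`.

For `|k - l| ≤ 2` the product `Δ_k f · Δ_l g` has frequencies of size at most `2 ^ (k + 4)`, so
`Δ_j` annihilates it when `k ≤ j - 5` (`LP_mul_eq_zero`).  This is seen by writing both blocks as
superpositions of plane waves and applying Fubini (`conv_planeWaves`).  Since
`∑_k |Δ_k f(x)| ≤ ‖f̂‖₁` up to normalization (`tsum_LP_le`), the series defining the remainder
converges absolutely and uniformly, and `Δ_j` may be applied termwise.  Young's inequality in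
`L¹` and Cauchy–Schwarz in space give, at fixed time,
`‖Δ_j R(f, g)‖₁ ≲ ∑_{k ≥ j - 4} ∑_{|m| ≤ 2} ‖Δ_k f‖₂ ‖Δ_{k + m} g‖₂`
(`eLpNorm_LP_remainder_le`).

As `p ≤ 2`, Bernstein's inequality `‖Δ_k f‖₂ ≲ 2 ^ (d (1 / p - 1 / 2) k) ‖Δ_k f‖_p`
(`LP_bernstein`) turns the `L²` norms into `L^p` norms; it follows from the reproducing formula
for a block, Hölder's inequality for the sup norm, and interpolation of `L²` between `L^p` and
`L^∞`.  Minkowski and Cauchy–Schwarz in time (`LqLp_remainder_le`) give the same bound for the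
`L^{Q/2}_t L¹` and `L^Q_t L^p` norms.  Multiplying by `2 ^ (s j)`, with `k = j - 4 + i`, leaves the
weight `2 ^ (-s i)`, which is summable over `i ≥ 0` because `s > 0`, and a discrete convolution
estimate in `ℓ^r` (`ellNorm_sum_le`) finishes the proof.
-/

open MeasureTheory Filter Complex
open scoped ENNReal NNReal RealInnerProductSpace Topology

noncomputable section

abbrev Rd (d : ℕ) := EuclideanSpace ℝ (Fin d)

/-- Fourier transform with the paper's convention `F[f](ξ) = ∫ e^{-i x·ξ} f(x) dx`. -/
def FT {d : ℕ} (f : Rd d → ℂ) (ξ : Rd d) : ℂ :=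
  ∫ x : Rd d, Complex.exp (-Complex.I * (↑(⟪x, ξ⟫) : ℂ)) * f x

/-- A Littlewood–Paley family: a Schwartz function `φ₀` whose Fourier transform is
real, takes values in `[0,1]`, is supported in the annulus `1/2 ≤ |ξ| ≤ 2`, and whose
dyadic dilates sum to `1` away from the origin. -/
structure LPData (d : ℕ) where
  φ : SchwartzMap (Rd d) ℂ
  him : ∀ ξ : Rd d, (FT (⇑φ) ξ).im = 0
  h0 : ∀ ξ : Rd d, 0 ≤ (FT (⇑φ) ξ).re
  h1 : ∀ ξ : Rd d, (FT (⇑φ) ξ).re ≤ 1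
  hsupp : ∀ ξ : Rd d, FT (⇑φ) ξ ≠ 0 → (1/2 : ℝ) ≤ ‖ξ‖ ∧ ‖ξ‖ ≤ 2
  hsum : ∀ ξ : Rd d, ξ ≠ 0 → HasSum (fun j : ℤ => FT (⇑φ) ((2:ℝ) ^ (-j) • ξ)) 1

/-- Littlewood–Paley block `Δ_j f = φ_j * f`, where `φ_j(x) = 2^{dj} φ₀(2^j x)`. -/
def LP {d : ℕ} (P : LPData d) (j : ℤ) (f : Rd d → ℂ) (x : Rd d) : ℂ :=
  ∫ y : Rd d, (((2:ℝ) ^ ((d : ℤ) * j) : ℝ) : ℂ) * P.φ ((2:ℝ) ^ j • y) * f (x - y)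

/-- `ℓ^r(ℤ)`-norm of a family of extended nonnegative reals. -/
def ellNorm (r : ℝ≥0∞) (a : ℤ → ℝ≥0∞) : ℝ≥0∞ :=
  if r = ∞ then ⨆ j, a j else (∑' j, a j ^ r.toReal) ^ (1 / r.toReal)

/-- Homogeneous Besov norm `‖f‖_{Ḃ^s_{p,r}}`. -/
def besov {d : ℕ} (P : LPData d) (s : ℝ) (p r : ℝ≥0∞) (f : Rd d → ℂ) : ℝ≥0∞ :=
  ellNorm r fun j => ENNReal.ofReal ((2:ℝ) ^ (s * (j:ℝ))) * eLpNorm (LP P j f) p volume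

/-- Mixed norm `L^q_t(0,∞; L^p_x)`. -/
def LqLp {d : ℕ} (q p : ℝ≥0∞) (g : ℝ → Rd d → ℂ) : ℝ≥0∞ :=
  if q = ∞ then essSup (fun t => eLpNorm (g t) p volume) (volume.restrict (Set.Ioi (0:ℝ)))
  else (∫⁻ t in Set.Ioi (0:ℝ), (eLpNorm (g t) p volume) ^ q.toReal) ^ (1 / q.toReal)

/-- Chemin–Lerner norm `‖f‖_{L̃^q(Ḃ^s_{p,r})}` on `ℝ^d × (0,∞)`. -/
def CL {d : ℕ} (P : LPData d) (s : ℝ) (q p r : ℝ≥0∞) (f : ℝ → Rd d → ℂ) : ℝ≥0∞ :=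
  ellNorm r fun j => ENNReal.ofReal ((2:ℝ) ^ (s * (j:ℝ))) * LqLp q p fun t => LP P j (f t)

/-- `f : ℝ^d × (0,∞) → ℂ` (curried as `f t x`) is slice-Schwartz: continuous on
`ℝ^d × (0,∞)` and Schwartz in `x` for each fixed `t > 0`. -/
def SliceSchwartz {d : ℕ} (f : ℝ → Rd d → ℂ) : Prop :=
  ContinuousOn (fun z : Rd d × ℝ => f z.2 z.1) (Set.univ ×ˢ Set.Ioi 0) ∧
  ∀ t : ℝ, 0 < t → ∃ g : SchwartzMap (Rd d) ℂ, f t = ⇑g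

/-! ### Norms of extended-nonnegative-valued functions -/

/-- Countable Minkowski inequality. -/
lemma eLpNorm_tsum_le_tsum {α : Type*} [MeasurableSpace α] {μ : Measure α} {q : ℝ≥0∞}
    (hq : 1 ≤ q) {F : ℕ → α → ℝ≥0∞} (hF : ∀ i, AEMeasurable (F i) μ) :
    eLpNorm (fun x => ∑' i, F i x) q μ ≤ ∑' i, eLpNorm (F i) q μ := by
  rcases eq_or_ne q ∞ with rfl | hqt
  · simp only [eLpNorm_exponent_top, eLpNormEssSup, enorm_eq_self]
    refine essSup_le_of_ae_le _ ?_
    have h : ∀ᵐ x ∂μ, ∀ i, F i x ≤ essSup (F i) μ :=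
      ae_all_iff.2 fun i => ENNReal.ae_le_essSup (F i)
    filter_upwards [h] with x hx
    exact ENNReal.tsum_le_tsum hx
  have hq0 : q ≠ 0 := (zero_lt_one.trans_le hq).ne'
  have hqr : 0 < q.toReal := ENNReal.toReal_pos hq0 hqt
  have hpart : ∀ N : ℕ, eLpNorm (∑ i ∈ Finset.range N, F i) q μ ≤ ∑' i, eLpNorm (F i) q μ :=
    fun N => (eLpNorm_sum_le (fun i _ => (hF i).aestronglyMeasurable) hq).trans
      (ENNReal.sum_le_tsum _)
  rw [eLpNorm_eq_lintegral_rpow_enorm_toReal hq0 hqt, one_div, ENNReal.rpow_inv_le_iff hqr]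
  simp only [enorm_eq_self]
  have h1 : ∀ x, (∑' i, F i x) ^ q.toReal
      = ⨆ N : ℕ, ((∑ i ∈ Finset.range N, F i) x) ^ q.toReal := by
    intro x
    rw [ENNReal.tsum_eq_iSup_nat]
    have := (ENNReal.orderIsoRpow q.toReal hqr).map_iSup
      (fun N => ∑ i ∈ Finset.range N, F i x)
    simp only [ENNReal.orderIsoRpow_apply] at this
    simpa only [Finset.sum_apply] using this
  simp_rw [h1]
  rw [lintegral_iSup']
  · refine iSup_le fun N => ?_
    have := hpart N
    rw [eLpNorm_eq_lintegral_rpow_enorm_toReal hq0 hqt, one_div, ENNReal.rpow_inv_le_iff hqr]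
      at this
    simpa only [enorm_eq_self] using this
  · intro N
    exact (Finset.aemeasurable_sum _ fun i _ => hF i).pow_const _
  · refine ae_of_all _ fun x M N hMN => ?_
    dsimp only
    gcongr
    simp only [Finset.sum_apply]
    exact Finset.sum_le_sum_of_subset (Finset.range_mono hMN)

lemma eLpNorm_const_mul_ennreal {α : Type*} [MeasurableSpace α] {μ : Measure α} {q : ℝ≥0∞}
    (hq : q ≠ 0) {c : ℝ≥0∞} (hc : c ≠ ∞) (F : α → ℝ≥0∞) :
    eLpNorm (fun x => c * F x) q μ = c * eLpNorm F q μ := by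
  rcases eq_or_ne q ∞ with rfl | hqt
  · simp only [eLpNorm_exponent_top, eLpNormEssSup, enorm_eq_self]
    exact ENNReal.essSup_const_mul
  have hqr : 0 < q.toReal := ENNReal.toReal_pos hq hqt
  simp only [eLpNorm_eq_lintegral_rpow_enorm_toReal hq hqt, enorm_eq_self]
  simp_rw [ENNReal.mul_rpow_of_nonneg _ _ hqr.le]
  rw [lintegral_const_mul' _ _ (ENNReal.rpow_ne_top_of_nonneg hqr.le hc),
    ENNReal.mul_rpow_of_nonneg _ _ (by positivity), ← ENNReal.rpow_mul,
    mul_one_div_cancel hqr.ne', ENNReal.rpow_one]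

/-- Cauchy–Schwarz in the form `L^Q · L^Q ⊆ L^{Q/2}`. -/
lemma eLpNorm_half_mul_le {α : Type*} [MeasurableSpace α] {μ : Measure α} {Q : ℝ≥0∞}
    (hQ : Q ≠ 0) {a b : α → ℝ≥0∞} (ha : AEMeasurable a μ) (hb : AEMeasurable b μ) :
    eLpNorm (fun x => a x * b x) (Q / 2) μ ≤ eLpNorm a Q μ * eLpNorm b Q μ := by
  rcases eq_or_ne Q ∞ with rfl | hQt
  · rw [ENNReal.top_div_of_ne_top (by simp)]
    simp only [eLpNorm_exponent_top, eLpNormEssSup, enorm_eq_self]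
    exact ENNReal.essSup_mul_le a b
  have hQr : 0 < Q.toReal := ENNReal.toReal_pos hQ hQt
  have h2 : (Q / 2).toReal = Q.toReal / 2 := by simp
  have h0 : Q / 2 ≠ 0 := by simp [hQ]
  have ht : Q / 2 ≠ ∞ := (ENNReal.div_lt_top hQt (by simp)).ne
  simp only [eLpNorm_eq_lintegral_rpow_enorm_toReal hQ hQt,
    eLpNorm_eq_lintegral_rpow_enorm_toReal h0 ht, enorm_eq_self, h2]
  have key := ENNReal.lintegral_mul_le_Lp_mul_Lq μ Real.HolderConjugate.two_two
    (ha.pow_const (Q.toReal / 2)) (hb.pow_const (Q.toReal / 2))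
  simp only [Pi.mul_apply, ← ENNReal.rpow_mul, div_mul_cancel₀ _ (two_ne_zero' ℝ)] at key
  simp_rw [ENNReal.mul_rpow_of_nonneg _ _ (half_pos hQr).le]
  refine (ENNReal.rpow_le_rpow key (by positivity)).trans (le_of_eq ?_)
  rw [ENNReal.mul_rpow_of_nonneg _ _ (by positivity), ← ENNReal.rpow_mul, ← ENNReal.rpow_mul]
  congr 2 <;> field_simp

lemma ellNorm_eq_eLpNorm {r : ℝ≥0∞} (hr : r ≠ 0) (a : ℤ → ℝ≥0∞) :
    ellNorm r a = eLpNorm a r Measure.count := by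
  unfold ellNorm
  split_ifs with h
  · subst h; simp [eLpNormEssSup]
  · rw [eLpNorm_eq_lintegral_rpow_enorm_toReal hr h]
    simp [lintegral_count]

lemma ellNorm_shift (r : ℝ≥0∞) (a : ℤ → ℝ≥0∞) (m : ℤ) :
    ellNorm r (fun j => a (j + m)) = ellNorm r a := by
  unfold ellNorm
  split_ifs
  · exact (Equiv.addRight m).iSup_comp (g := a)
  · rw [← (Equiv.addRight m).tsum_eq (fun j => a j ^ r.toReal)]; rfl

lemma le_ellNorm {r : ℝ≥0∞} (hr : r ≠ 0) (a : ℤ → ℝ≥0∞) (j : ℤ) : a j ≤ ellNorm r a := by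
  rw [ellNorm_eq_eLpNorm hr]
  simpa using enorm_le_eLpNorm_count a j hr

lemma ellNorm_mono (r : ℝ≥0∞) {a b : ℤ → ℝ≥0∞} (h : ∀ j, a j ≤ b j) :
    ellNorm r a ≤ ellNorm r b := by
  unfold ellNorm
  split_ifs
  · exact iSup_mono h
  · gcongr; exact h _

lemma LqLp_eq_eLpNorm {d : ℕ} {q p : ℝ≥0∞} (hq : q ≠ 0) (g : ℝ → Rd d → ℂ) :
    LqLp q p g = eLpNorm (fun t => eLpNorm (g t) p volume) q (volume.restrict (Set.Ioi 0)) := by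
  unfold LqLp
  split_ifs with h
  · subst h; simp [eLpNormEssSup]
  · rw [eLpNorm_eq_lintegral_rpow_enorm_toReal hq h]
    simp

/-- The discrete Young inequality `ℓ¹ * ℓ^r ⊆ ℓ^r` behind the summation over the frequencies
`k ≥ j - 4`; the second factor enters only through its supremum. -/
lemma ellNorm_sum_le {r : ℝ≥0∞} (hr : 1 ≤ r) {K : ℝ≥0∞} (hK : K ≠ ∞) {w : ℕ → ℝ≥0∞}
    (hw : ∀ i, w i ≠ ∞) {D a b : ℤ → ℝ≥0∞}
    (h : ∀ j, D j ≤ K * ∑' i : ℕ, w i * (a (j - 4 + i) *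
      ∑ m ∈ Finset.Icc (-2 : ℤ) 2, b (j - 4 + i + m))) :
    ellNorm r D ≤ K * (5 * ∑' i, w i) * ellNorm r a * ellNorm r b := by
  have hr0 : r ≠ 0 := (zero_lt_one.trans_le hr).ne'
  have hb : ∀ k : ℤ, ∑ m ∈ Finset.Icc (-2 : ℤ) 2, b (k + m) ≤ 5 * ellNorm r b := by
    intro k
    refine (Finset.sum_le_card_nsmul _ _ (ellNorm r b) fun m _ => le_ellNorm hr0 b _).trans ?_
    simp
  have hD : ∀ j, D j ≤ (K * 5 * ellNorm r b) * ∑' i : ℕ, w i * a (j - 4 + i) := by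
    intro j
    refine (h j).trans ?_
    have e : (K * 5 * ellNorm r b) * ∑' i : ℕ, w i * a (j - 4 + i)
        = K * ∑' i : ℕ, w i * (a (j - 4 + i) * (5 * ellNorm r b)) := by
      simp_rw [← mul_assoc (w _)]
      rw [ENNReal.tsum_mul_right]; ring
    rw [e]
    gcongr
    exact hb _
  have hS : ellNorm r (fun j => ∑' i : ℕ, w i * a (j - 4 + i))
      ≤ (∑' i, w i) * ellNorm r a := by
    rw [ellNorm_eq_eLpNorm hr0]
    refine (eLpNorm_tsum_le_tsum hr fun i => (measurable_of_countable _).aemeasurable).trans ?_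
    rw [← ENNReal.tsum_mul_right]
    refine ENNReal.tsum_le_tsum fun i => ?_
    rw [eLpNorm_const_mul_ennreal hr0 (hw i), ← ellNorm_eq_eLpNorm hr0]
    refine le_of_eq ?_
    congr 1
    rw [← ellNorm_shift r a (-4 + i)]
    congr 1; ext j; congr 1; ring
  -- an infinite `ℓ^r` norm of `b` needs care: the constant cannot then be pulled out of `ellNorm`
  rcases eq_or_ne (ellNorm r b) ∞ with hbt | hbt
  · rcases eq_or_ne (K * (5 * ∑' i, w i) * ellNorm r a) 0 with h0 | h0
    · have hz : ∀ j, D j ≤ 0 := by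
        intro j
        refine (h j).trans ?_
        simp only [mul_eq_zero, OfNat.ofNat_ne_zero, false_or] at h0
        rcases h0 with (h0 | h0) | h0
        · simp [h0]
        · rw [ENNReal.tsum_eq_zero] at h0; simp [h0]
        · have : ∀ k, a k = 0 := fun k => le_antisymm (h0 ▸ le_ellNorm hr0 a k) zero_le
          simp [this]
      refine (ellNorm_mono r hz).trans ?_
      rw [ellNorm_eq_eLpNorm hr0]
      simp
    · rw [hbt, ENNReal.mul_top h0]; exact le_top
  · refine (ellNorm_mono r hD).trans ?_
    rw [ellNorm_eq_eLpNorm hr0, eLpNorm_const_mul_ennreal hr0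
      (ENNReal.mul_ne_top (ENNReal.mul_ne_top hK (by simp)) hbt), ← ellNorm_eq_eLpNorm hr0]
    calc _ ≤ (K * 5 * ellNorm r b) * ((∑' i, w i) * ellNorm r a) := by gcongr
      _ = _ := by ring

/-! ### Dilated kernels and their Fourier transforms -/

/-- The `L¹`-normalized dyadic dilate `2^{dj} φ(2^j y)`, so that `LP P j` is convolution with
`kern P.φ j`. -/
def kern {d : ℕ} (φ : Rd d → ℂ) (j : ℤ) (y : Rd d) : ℂ :=
  (((2:ℝ) ^ ((d : ℤ) * j) : ℝ) : ℂ) * φ ((2:ℝ) ^ j • y)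

lemma LP_eq {d : ℕ} (P : LPData d) (j : ℤ) (f : Rd d → ℂ) (x : Rd d) :
    LP P j f x = ∫ y, kern P.φ j y * f (x - y) := rfl

lemma kern_continuous {d : ℕ} (φ : SchwartzMap (Rd d) ℂ) (j : ℤ) : Continuous (kern φ j) := by
  unfold kern
  have := φ.continuous
  fun_prop

lemma eLpNorm_kern {d : ℕ} (φ : SchwartzMap (Rd d) ℂ) (j : ℤ) (q : ℝ≥0∞) :
    eLpNorm (kern φ j) q volume
      = ENNReal.ofReal ((2:ℝ) ^ ((d:ℝ) * (j:ℝ) * (1 - (1 / q).toReal))) * eLpNorm φ q volume := by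
  have h2 : (0:ℝ) < (2:ℝ) ^ j := by positivity
  have e1 : kern φ j = (((2:ℝ) ^ ((d : ℤ) * j) : ℝ) : ℂ) • ((⇑φ) ∘ fun y => (2:ℝ) ^ j • y) := rfl
  rw [e1, eLpNorm_const_smul, ← eLpNorm_map_measure φ.continuous.aestronglyMeasurable
    (by fun_prop), Measure.map_addHaar_smul _ h2.ne',
    eLpNorm_smul_measure_of_ne_zero (by simp; positivity), smul_eq_mul, ← mul_assoc]
  congr 1
  rw [← ofReal_norm, Complex.norm_real, Real.norm_of_nonneg (by positivity),
    ENNReal.ofReal_rpow_of_pos (by positivity), ← ENNReal.ofReal_mul (by positivity)]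
  congr 1
  rw [abs_of_pos (by positivity), finrank_euclideanSpace_fin, ← Real.rpow_natCast,
    ← Real.rpow_intCast, ← Real.rpow_intCast, ← Real.rpow_mul (by positivity),
    ← Real.rpow_neg (by positivity), ← Real.rpow_mul (by positivity),
    ← Real.rpow_add (by positivity)]
  congr 1
  push_cast
  ring

lemma kern_integrable {d : ℕ} (φ : SchwartzMap (Rd d) ℂ) (j : ℤ) : Integrable (kern φ j) := by
  rw [← memLp_one_iff_integrable]
  refine ⟨(kern_continuous φ j).aestronglyMeasurable, ?_⟩
  rw [eLpNorm_kern]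
  exact ENNReal.mul_lt_top ENNReal.ofReal_lt_top (φ.memLp 1 volume).eLpNorm_lt_top

lemma FT_kern {d : ℕ} (φ : Rd d → ℂ) (j : ℤ) (ξ : Rd d) :
    FT (kern φ j) ξ = FT φ ((2:ℝ) ^ (-j) • ξ) := by
  have h2 : (0:ℝ) < (2:ℝ) ^ j := by positivity
  unfold FT
  have key := Measure.integral_comp_smul (volume : Measure (Rd d))
    (fun x => Complex.exp (-Complex.I * (↑(⟪x, (2:ℝ) ^ (-j) • ξ⟫) : ℂ)) * φ x) ((2:ℝ) ^ j)
  have e : (∫ x, Complex.exp (-Complex.I * (↑(⟪x, (2:ℝ) ^ (-j) • ξ⟫) : ℂ)) * φ x)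
      = (((2:ℝ) ^ j) ^ d) • ∫ x, Complex.exp (-Complex.I *
        (↑(⟪(2:ℝ) ^ j • x, (2:ℝ) ^ (-j) • ξ⟫) : ℂ)) * φ ((2:ℝ) ^ j • x) := by
    rw [key, smul_smul, finrank_euclideanSpace_fin, abs_of_pos (by positivity),
      mul_inv_cancel₀ (by positivity), one_smul]
  rw [e, ← integral_smul]
  congr 1
  ext x
  have e2 : ⟪(2:ℝ) ^ j • x, (2:ℝ) ^ (-j) • ξ⟫ = ⟪x, ξ⟫ := by
    rw [real_inner_smul_left, real_inner_smul_right, ← mul_assoc, zpow_neg,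
      mul_inv_cancel₀ h2.ne', one_mul]
  rw [e2, kern, Complex.real_smul, ← zpow_natCast, ← zpow_mul, mul_comm (d:ℤ) j]
  ring

lemma FT_eq_fourier {d : ℕ} (f : SchwartzMap (Rd d) ℂ) (ξ : Rd d) :
    FT f ξ = FourierTransform.fourier f ((2 * Real.pi)⁻¹ • ξ) := by
  rw [SchwartzMap.fourier_coe, Real.fourier_eq']
  unfold FT
  congr 1; ext x
  rw [real_inner_smul_right, smul_eq_mul]
  congr 2
  push_cast
  have : (Real.pi : ℂ) ≠ 0 := by exact_mod_cast Real.pi_ne_zero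
  field_simp

lemma FT_continuous {d : ℕ} (f : SchwartzMap (Rd d) ℂ) : Continuous (FT f) := by
  have : FT (⇑f) = fun ξ => FourierTransform.fourier f ((2 * Real.pi)⁻¹ • ξ) :=
    funext (FT_eq_fourier f)
  rw [this]
  exact (SchwartzMap.continuous _).comp (continuous_const_smul _)

lemma LPData.FT_norm_le {d : ℕ} (P : LPData d) (ξ : Rd d) : ‖FT P.φ ξ‖ ≤ 1 := by
  have : FT P.φ ξ = ((FT P.φ ξ).re : ℂ) := Complex.ext (by simp) (by simp [P.him])
  rw [this, Complex.norm_real, Real.norm_of_nonneg (P.h0 ξ)]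
  exact P.h1 ξ

lemma LPData.tsum_FT_le {d : ℕ} (P : LPData d) (ξ : Rd d) :
    ∑' k : ℤ, ‖FT P.φ ((2:ℝ) ^ (-k) • ξ)‖ₑ ≤ 1 := by
  rcases eq_or_ne ξ 0 with rfl | hξ
  · have : FT P.φ (0 : Rd d) = 0 := by
      by_contra h
      have := (P.hsupp 0 h).1
      norm_num at this
    simp [this]
  · have e : ∀ η, ‖FT P.φ η‖ₑ = ENNReal.ofReal (FT P.φ η).re := by
      intro η
      have : FT P.φ η = ((FT P.φ η).re : ℂ) := Complex.ext (by simp) (by simp [P.him])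
      rw [this, ← ofReal_norm, Complex.norm_real, Real.norm_of_nonneg (P.h0 η),
        Complex.ofReal_re]
    have hs := Complex.hasSum_re (P.hsum ξ hξ)
    simp_rw [e]
    rw [← ENNReal.ofReal_tsum_of_nonneg (fun k => P.h0 _) hs.summable, hs.tsum_eq]
    simp

/-- A Schwartz function whose Fourier transform is `1` on the ball of radius `2`. -/
lemma exists_low_pass (d : ℕ) :
    ∃ h : SchwartzMap (Rd d) ℂ, ∀ ξ : Rd d, ‖ξ‖ ≤ 2 → FT h ξ = 1 := by
  let b : ContDiffBump (0 : Rd d) := ⟨2, 3, by norm_num, by norm_num⟩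
  have hcs : HasCompactSupport (fun ξ : Rd d => (b ξ : ℂ)) :=
    b.hasCompactSupport.comp_left (g := ((↑) : ℝ → ℂ)) (by simp)
  have hsm : ContDiff ℝ ((⊤ : ℕ∞) : WithTop ℕ∞) (fun ξ : Rd d => (b ξ : ℂ)) :=
    Complex.ofRealCLM.contDiff.comp b.contDiff
  let χ : SchwartzMap (Rd d) ℂ := hcs.toSchwartzMap hsm
  refine ⟨FourierTransformInv.fourierInv χ, fun ξ hξ => ?_⟩
  rw [FT_eq_fourier, FourierTransform.fourier_fourierInv_eq]
  have h1 : (b ((2 * Real.pi)⁻¹ • ξ)) = 1 := by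
    apply b.one_of_mem_closedBall
    rw [mem_closedBall_zero_iff, norm_smul, Real.norm_of_nonneg (by positivity)]
    have h3 := Real.pi_gt_three
    have : (2 * Real.pi)⁻¹ ≤ 1 := inv_le_one_of_one_le₀ (by linarith)
    calc _ ≤ 1 * ‖ξ‖ := by gcongr
      _ ≤ 2 := by linarith
  change ((b ((2 * Real.pi)⁻¹ • ξ) : ℝ) : ℂ) = 1
  rw [h1]; simp

/-! ### Superpositions of plane waves -/

/-- Convolving a superposition of plane waves with `K` multiplies the amplitude by the Fourier
transform of `K`. The parameter space is arbitrary so that the lemma applies both to a single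
function and to the product of two (with frequency `ξ + η`). -/
lemma conv_planeWaves {d : ℕ} {Ω : Type*} [MeasurableSpace Ω] {μ : Measure Ω} [SFinite μ]
    {K : Rd d → ℂ} (hK : Integrable K) {a : Ω → ℂ} (ha : Integrable a μ) {Ξ : Ω → Rd d}
    (hΞ : Measurable Ξ) (x : Rd d) :
    ∫ y, K y * ∫ ω, a ω * Complex.exp (Complex.I * (↑(⟪x - y, Ξ ω⟫) : ℂ)) ∂μ
      = ∫ ω, a ω * FT K (Ξ ω) * Complex.exp (Complex.I * (↑(⟪x, Ξ ω⟫) : ℂ)) ∂μ := by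
  simp_rw [← integral_const_mul]
  rw [integral_integral_swap]
  · congr 1; ext ω
    rw [FT, ← integral_const_mul, ← integral_mul_const]
    congr 1; ext y
    rw [inner_sub_left, Complex.ofReal_sub, mul_sub, sub_eq_add_neg, Complex.exp_add, neg_mul]
    ring
  · have h1 : Integrable (fun z : Rd d × Ω => K z.1 * a z.2) (volume.prod μ) := hK.mul_prod ha
    have hm : Measurable (fun z : Rd d × Ω =>
        Complex.exp (Complex.I * (↑(⟪x - z.1, Ξ z.2⟫) : ℂ))) := by
      fun_prop
    have := h1.mul_bdd (c := 1) hm.aestronglyMeasurable (ae_of_all _ fun z => by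
      rw [mul_comm, Complex.norm_exp_ofReal_mul_I])
    refine this.congr (ae_of_all _ fun z => ?_)
    simp only [Function.uncurry]
    ring

lemma schwartz_planeWaves {d : ℕ} (g : SchwartzMap (Rd d) ℂ) (x : Rd d) :
    g x = ∫ ξ, FourierTransform.fourier g ξ *
      Complex.exp (Complex.I * (↑(⟪x, (2 * Real.pi) • ξ⟫) : ℂ)) := by
  have hinv : FourierTransformInv.fourierInv
      (FourierTransform.fourier g : SchwartzMap (Rd d) ℂ) = g :=
    FourierTransform.fourierInv_fourier_eq g
  conv_lhs => rw [← hinv, SchwartzMap.fourierInv_coe, Real.fourierInv_eq']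
  congr 1; ext ξ
  rw [smul_eq_mul, mul_comm, real_inner_smul_right, real_inner_comm x ξ]
  congr 2
  push_cast
  ring

/-- The amplitude of `LP P k g` as a superposition of the plane waves `e^{i x·2πξ}`. -/
def amp {d : ℕ} (P : LPData d) (k : ℤ) (g : SchwartzMap (Rd d) ℂ) (ξ : Rd d) : ℂ :=
  FourierTransform.fourier g ξ * FT P.φ ((2:ℝ) ^ (-k) • (2 * Real.pi) • ξ)

lemma amp_integrable {d : ℕ} (P : LPData d) (k : ℤ) (g : SchwartzMap (Rd d) ℂ) :
    Integrable (amp P k g) := by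
  have hc : Continuous (fun ξ : Rd d => FT P.φ ((2:ℝ) ^ (-k) • (2 * Real.pi) • ξ)) :=
    (FT_continuous P.φ).comp (by fun_prop)
  exact (SchwartzMap.integrable _).mul_bdd (c := 1) hc.aestronglyMeasurable
    (ae_of_all _ fun ξ => P.FT_norm_le _)

lemma amp_ne_zero {d : ℕ} (P : LPData d) (k : ℤ) (g : SchwartzMap (Rd d) ℂ) {ξ : Rd d}
    (h : amp P k g ξ ≠ 0) : ‖(2 * Real.pi) • ξ‖ ≤ 2 * (2:ℝ) ^ k := by
  have := (P.hsupp _ (right_ne_zero_of_mul h)).2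
  rw [norm_smul _ ((2 * Real.pi) • ξ), Real.norm_of_nonneg (by positivity), zpow_neg] at this
  have h2 : (0:ℝ) < (2:ℝ) ^ k := by positivity
  rw [inv_mul_le_iff₀ h2] at this
  linarith

lemma LP_planeWaves {d : ℕ} (P : LPData d) (k : ℤ) (g : SchwartzMap (Rd d) ℂ) (x : Rd d) :
    LP P k g x = ∫ ξ, amp P k g ξ *
      Complex.exp (Complex.I * (↑(⟪x, (2 * Real.pi) • ξ⟫) : ℂ)) := by
  rw [LP_eq]
  simp_rw [schwartz_planeWaves g (x - _)]
  rw [conv_planeWaves (kern_integrable _ _) (SchwartzMap.integrable _) (by fun_prop)]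
  simp_rw [FT_kern]
  rfl

/-- Reproducing formula: convolution with a low-pass kernel at frequency `2^k` fixes
`LP P k g`. -/
lemma LP_reproduce {d : ℕ} (P : LPData d) (k : ℤ) (g : SchwartzMap (Rd d) ℂ)
    {h : SchwartzMap (Rd d) ℂ} (hh : ∀ ξ : Rd d, ‖ξ‖ ≤ 2 → FT h ξ = 1) (x : Rd d) :
    LP P k g x = ∫ y, kern h k y * LP P k g (x - y) := by
  simp_rw [LP_planeWaves]
  rw [conv_planeWaves (kern_integrable _ _) (amp_integrable P k g) (by fun_prop)]
  congr 1; ext ξ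
  congr 1
  by_cases h0 : amp P k g ξ = 0
  · simp [h0]
  rw [FT_kern, hh, mul_one]
  have := amp_ne_zero P k g h0
  rw [norm_smul, Real.norm_of_nonneg (by positivity), zpow_neg]
  rw [inv_mul_le_iff₀ (by positivity)]
  linarith

/-- The product of blocks of frequencies `2^k` and `2^l` has its spectrum in the ball of radius
`2^{k+1} + 2^{l+1} ≤ 10 · 2^k`, which misses the annulus `|ξ| ≥ 2^{j-1}` as soon as
`j ≥ k + 5`. -/
lemma LP_mul_eq_zero {d : ℕ} (P : LPData d) {j k l : ℤ} (hjk : k + 5 ≤ j) (hl : l ≤ k + 2)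
    (f g : SchwartzMap (Rd d) ℂ) (x : Rd d) :
    LP P j (fun y => LP P k f y * LP P l g y) x = 0 := by
  rw [LP_eq]
  have hprod : ∀ y, LP P k f y * LP P l g y = ∫ z : Rd d × Rd d,
      (amp P k f z.1 * amp P l g z.2) * Complex.exp (Complex.I *
        (↑(⟪y, (2 * Real.pi) • z.1 + (2 * Real.pi) • z.2⟫) : ℂ)) ∂(volume.prod volume) := by
    intro y
    rw [LP_planeWaves, LP_planeWaves, ← integral_prod_mul]
    congr 1; ext z
    rw [inner_add_right, Complex.ofReal_add, mul_add, Complex.exp_add]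
    ring
  simp_rw [hprod]
  rw [conv_planeWaves (Ξ := fun z : Rd d × Rd d => (2 * Real.pi) • z.1 + (2 * Real.pi) • z.2)
    (kern_integrable _ _) ((amp_integrable P k f).mul_prod (amp_integrable P l g))
    (by fun_prop)]
  refine integral_eq_zero_of_ae (ae_of_all _ fun z => ?_)
  simp only [Pi.zero_apply]
  by_cases hf : amp P k f z.1 = 0
  · simp [hf]
  by_cases hg : amp P l g z.2 = 0
  · simp [hg]
  have hF : FT (kern P.φ j) ((2 * Real.pi) • z.1 + (2 * Real.pi) • z.2) = 0 := by
    rw [FT_kern]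
    by_contra hne
    have h1 := (P.hsupp _ hne).1
    rw [norm_smul, Real.norm_of_nonneg (by positivity), zpow_neg] at h1
    have h2 := norm_add_le ((2 * Real.pi) • z.1) ((2 * Real.pi) • z.2)
    have h3 := amp_ne_zero P k f hf
    have h4 := amp_ne_zero P l g hg
    have h5 : (2:ℝ) ^ l ≤ (2:ℝ) ^ (k + 2) := zpow_le_zpow_right₀ (by norm_num) hl
    have h6 : (2:ℝ) ^ (k + 5) ≤ (2:ℝ) ^ j := zpow_le_zpow_right₀ (by norm_num) hjk
    rw [zpow_add₀ (by norm_num)] at h5 h6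
    have hk : (0:ℝ) < (2:ℝ) ^ k := by positivity
    have hj : (0:ℝ) < (2:ℝ) ^ j := by positivity
    rw [le_inv_mul_iff₀ hj] at h1
    norm_num at h5 h6
    nlinarith
  rw [hF]; simp

lemma tsum_LP_le {d : ℕ} (P : LPData d) (g : SchwartzMap (Rd d) ℂ) (x : Rd d) :
    ∑' k : ℤ, ‖LP P k g x‖ₑ ≤ ∫⁻ ξ, ‖FourierTransform.fourier g ξ‖ₑ := by
  have h1 : ∀ k, ‖LP P k g x‖ₑ ≤ ∫⁻ ξ, ‖amp P k g ξ‖ₑ := by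
    intro k
    rw [LP_planeWaves]
    refine (enorm_integral_le_lintegral_enorm _).trans (le_of_eq ?_)
    congr 1; ext ξ
    rw [enorm_mul, ← ofReal_norm (Complex.exp _), mul_comm Complex.I,
      Complex.norm_exp_ofReal_mul_I]
    simp
  refine (ENNReal.tsum_le_tsum h1).trans ?_
  rw [← lintegral_tsum fun k => (amp_integrable P k g).1.enorm]
  refine lintegral_mono fun ξ => ?_
  simp only [amp, enorm_mul]
  rw [ENNReal.tsum_mul_left]
  calc _ ≤ ‖FourierTransform.fourier g ξ‖ₑ * 1 := by gcongr; exact P.tsum_FT_le _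
    _ = _ := mul_one _

/-! ### Bounds for a fixed time -/

lemma LP_stronglyMeasurable {d : ℕ} (P : LPData d) (k : ℤ) {g : Rd d → ℂ} (hg : Measurable g) :
    StronglyMeasurable (LP P k g) := by
  have hk := (kern_continuous P.φ k).measurable
  have : Measurable (Function.uncurry fun x y : Rd d => kern P.φ k y * g (x - y)) := by
    unfold Function.uncurry
    exact (hk.comp measurable_snd).mul (hg.comp (measurable_fst.sub measurable_snd))
  exact this.stronglyMeasurable.integral_prod_right

lemma eLpNorm_one_LP_le {d : ℕ} (P : LPData d) (j : ℤ) {w : Rd d → ℂ} (hw : Measurable w) :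
    eLpNorm (LP P j w) 1 volume ≤ eLpNorm P.φ 1 volume * eLpNorm w 1 volume := by
  have hk : eLpNorm P.φ 1 volume = eLpNorm (kern P.φ j) 1 volume := by
    rw [eLpNorm_kern]; simp
  have hkm := (kern_continuous P.φ j).measurable
  rw [hk]
  simp only [eLpNorm_one_eq_lintegral_enorm]
  calc ∫⁻ x, ‖LP P j w x‖ₑ
      ≤ ∫⁻ x, ∫⁻ y, ‖kern P.φ j y‖ₑ * ‖w (x - y)‖ₑ := by
        refine lintegral_mono fun x => ?_
        rw [LP_eq]
        refine (enorm_integral_le_lintegral_enorm _).trans (le_of_eq ?_)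
        simp_rw [enorm_mul]
    _ = ∫⁻ y, ∫⁻ x, ‖kern P.φ j y‖ₑ * ‖w (x - y)‖ₑ := by
        refine lintegral_lintegral_swap (Measurable.aemeasurable ?_)
        unfold Function.uncurry
        exact (hkm.comp measurable_snd).enorm.mul
          (hw.comp (measurable_fst.sub measurable_snd)).enorm
    _ = ∫⁻ y, ‖kern P.φ j y‖ₑ * ∫⁻ x, ‖w x‖ₑ := by
        congr 1; ext y
        rw [lintegral_const_mul' _ _ (by simp),
          lintegral_sub_right_eq_self (fun x => ‖w x‖ₑ) y]
    _ = _ := lintegral_mul_const _ hkm.enorm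

/-- Bernstein's inequality from `L^p` to `L²`. The sup bound `‖u‖_∞ ≲ 2^{kd/p} ‖u‖_p`, from the
reproducing formula and Hölder, is interpolated with `‖u‖_p`. -/
lemma LP_bernstein {d : ℕ} (P : LPData d) {p : ℝ≥0∞} (hp1 : 1 ≤ p) (hp2 : p ≤ 2) :
    ∃ B : ℝ≥0∞, B ≠ ∞ ∧ ∀ (k : ℤ) (g : SchwartzMap (Rd d) ℂ),
      eLpNorm (LP P k g) 2 volume
        ≤ B * ENNReal.ofReal ((2:ℝ) ^ ((d:ℝ) * ((1 / p).toReal - 1 / 2) * (k:ℝ)))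
          * eLpNorm (LP P k g) p volume := by
  obtain ⟨h, hh⟩ := exists_low_pass d
  have hpt : p ≠ ∞ := (hp2.trans_lt (by simp)).ne
  have hp0 : p ≠ 0 := (zero_lt_one.trans_le hp1).ne'
  have hpr : 0 < p.toReal := ENNReal.toReal_pos hp0 hpt
  have hpr2 : p.toReal ≤ 2 := by simpa using ENNReal.toReal_mono (by simp) hp2
  have hc : p.HolderConjugate (ENNReal.conjExponent p) := .conjExponent hp1
  set p' := ENNReal.conjExponent p with hp'
  have hc' : p'.HolderConjugate p := hc.symm
  have hconj : 1 - (1 / p').toReal = p.toReal⁻¹ := by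
    have e := ENNReal.HolderConjugate.inv_add_inv_eq_one p p'
    have hp't : p'⁻¹ ≠ ∞ := fun h => by rw [h] at e; simp at e
    have := congrArg ENNReal.toReal e
    rw [ENNReal.toReal_add (by simpa using hp0) hp't, ENNReal.toReal_inv, ENNReal.toReal_one]
      at this
    rw [one_div]; linarith
  have he : 0 ≤ 1 - p.toReal / 2 := by linarith
  refine ⟨eLpNorm h p' volume ^ (1 - p.toReal / 2),
    ENNReal.rpow_ne_top_of_nonneg he (h.memLp p' volume).eLpNorm_ne_top, fun k g => ?_⟩
  set u := LP P k g with hu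
  have hum : StronglyMeasurable u := LP_stronglyMeasurable P k g.continuous.measurable
  set M := eLpNorm (kern h k) p' volume with hM
  set N := eLpNorm u p volume with hN
  have hsup : ∀ x, ‖u x‖ₑ ≤ M * N := by
    intro x
    have hmp := Measure.measurePreserving_sub_left (volume : Measure (Rd d)) x
    calc ‖u x‖ₑ = ‖∫ y, kern h k y * u (x - y)‖ₑ := by
          rw [hu, ← LP_reproduce P k g hh x]
      _ ≤ ∫⁻ y, ‖kern h k y * u (x - y)‖ₑ := enorm_integral_le_lintegral_enorm _
      _ = eLpNorm (kern h k • fun y => u (x - y)) 1 volume := by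
          rw [eLpNorm_one_eq_lintegral_enorm]; rfl
      _ ≤ M * eLpNorm (fun y => u (x - y)) p volume :=
          eLpNorm_smul_le_mul_eLpNorm
            (hum.comp_measurable hmp.measurable).aestronglyMeasurable
            (kern_continuous h k).aestronglyMeasurable
      _ = M * N := by
          rw [hN, ← eLpNorm_comp_measurePreserving hum.aestronglyMeasurable hmp]; rfl
  have hNp : ∫⁻ x, ‖u x‖ₑ ^ p.toReal = N ^ p.toReal := by
    rw [hN, eLpNorm_eq_lintegral_rpow_enorm_toReal hp0 hpt, ← ENNReal.rpow_mul,
      one_div_mul_cancel hpr.ne', ENNReal.rpow_one]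
  have hsq : ∫⁻ x, ‖u x‖ₑ ^ (2:ℝ) ≤ N ^ p.toReal * (M * N) ^ (2 - p.toReal) := by
    rw [← hNp, ← lintegral_mul_const _ (hum.measurable.enorm.pow_const _)]
    refine lintegral_mono fun x => ?_
    calc ‖u x‖ₑ ^ (2:ℝ) = ‖u x‖ₑ ^ p.toReal * ‖u x‖ₑ ^ (2 - p.toReal) := by
          rw [← ENNReal.rpow_add_of_nonneg _ _ hpr.le (by linarith)]; congr 1; ring
      _ ≤ _ := by gcongr; exact hsup x
  have hMe : M ^ (1 - p.toReal / 2) = eLpNorm h p' volume ^ (1 - p.toReal / 2) *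
      ENNReal.ofReal ((2:ℝ) ^ ((d:ℝ) * ((1 / p).toReal - 1 / 2) * (k:ℝ))) := by
    rw [hM, eLpNorm_kern, hconj, ENNReal.mul_rpow_of_nonneg _ _ he, mul_comm,
      ENNReal.ofReal_rpow_of_pos (by positivity), ← Real.rpow_mul (by positivity)]
    congr 3
    rw [one_div p, ENNReal.toReal_inv]
    field_simp
  rw [← hMe, eLpNorm_eq_lintegral_rpow_enorm_toReal (by simp) (by simp), ENNReal.toReal_ofNat]
  refine (ENNReal.rpow_le_rpow hsq (by norm_num)).trans (le_of_eq ?_)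
  rw [ENNReal.mul_rpow_of_nonneg _ _ (by linarith : 0 ≤ 2 - p.toReal), mul_left_comm,
    ← ENNReal.rpow_add_of_nonneg _ _ hpr.le (by linarith),
    ENNReal.mul_rpow_of_nonneg _ _ (by norm_num), ← ENNReal.rpow_mul, ← ENNReal.rpow_mul]
  have e1 : (2 - p.toReal) * (1 / 2) = 1 - p.toReal / 2 := by ring
  have e2 : (p.toReal + (2 - p.toReal)) * (1 / 2) = 1 := by ring
  rw [e1, e2, ENNReal.rpow_one]

/-- The part `∑_{|m| ≤ 2} Δ_k f · Δ_{k+m} g` of the remainder. -/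
def diag {d : ℕ} (P : LPData d) (f g : Rd d → ℂ) (k : ℤ) (x : Rd d) : ℂ :=
  ∑ m ∈ Finset.Icc (-2 : ℤ) 2, LP P k f x * LP P (k + m) g x

lemma tsum_near_eq_diag {d : ℕ} (P : LPData d) (f g : Rd d → ℂ) (k : ℤ) (x : Rd d) :
    ∑' ℓ : {m : ℤ // |k - m| ≤ 2}, LP P k f x * LP P (ℓ : ℤ) g x = diag P f g k x := by
  have h : ∀ m : ℤ, m ∈ Finset.Icc (k + -2) (k + 2) ↔ |k - m| ≤ 2 := by
    intro m
    rw [Finset.mem_Icc, abs_le]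
    constructor <;> rintro ⟨h1, h2⟩ <;> constructor <;> linarith
  rw [← (Equiv.subtypeEquivRight h).tsum_eq]
  simp only [Equiv.subtypeEquivRight_apply_coe]
  rw [Finset.tsum_subtype (Finset.Icc (k + -2) (k + 2)) (fun l => LP P k f x * LP P l g x),
    ← Finset.map_add_left_Icc, Finset.sum_map]
  rfl

lemma diag_measurable {d : ℕ} (P : LPData d) (f g : SchwartzMap (Rd d) ℂ) (k : ℤ) :
    Measurable (diag P f g k) := by
  unfold diag
  exact Finset.measurable_sum _ fun m _ =>
    (LP_stronglyMeasurable P k f.continuous.measurable).measurable.mul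
      (LP_stronglyMeasurable P (k + m) g.continuous.measurable).measurable

/-- Absolute convergence of the remainder, uniformly in `x`. -/
lemma tsum_diag_le {d : ℕ} (P : LPData d) (f g : SchwartzMap (Rd d) ℂ) (x : Rd d) :
    ∑' k, ‖diag P f g k x‖ₑ ≤ (∫⁻ ξ, ‖FourierTransform.fourier f ξ‖ₑ) *
      (5 * ∫⁻ ξ, ‖FourierTransform.fourier g ξ‖ₑ) := by
  set Mg := ∫⁻ ξ, ‖FourierTransform.fourier g ξ‖ₑ
  have hg : ∀ l, ‖LP P l g x‖ₑ ≤ Mg := fun l => (ENNReal.le_tsum l).trans (tsum_LP_le P g x)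
  calc _ ≤ ∑' k, ‖LP P k f x‖ₑ * (5 * Mg) := by
        refine ENNReal.tsum_le_tsum fun k => ?_
        unfold diag
        refine (enorm_sum_le _ _).trans ?_
        simp_rw [enorm_mul, ← Finset.mul_sum]
        gcongr
        refine (Finset.sum_le_card_nsmul _ _ Mg fun m _ => hg _).trans ?_
        simp
    _ ≤ _ := by
        rw [ENNReal.tsum_mul_right]
        gcongr
        exact tsum_LP_le P f x

lemma lintegral_fourier_ne_top {d : ℕ} (f : SchwartzMap (Rd d) ℂ) :
    ∫⁻ ξ, ‖FourierTransform.fourier f ξ‖ₑ ≠ ∞ :=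
  (SchwartzMap.integrable (FourierTransform.fourier f)).2.ne

lemma LP_tsum_diag {d : ℕ} (P : LPData d) (f g : SchwartzMap (Rd d) ℂ) (j : ℤ) (x : Rd d) :
    LP P j (fun y => ∑' k, diag P f g k y) x = ∑' k, LP P j (diag P f g k) x := by
  simp only [LP_eq]
  simp_rw [← tsum_mul_left]
  have hm : ∀ k, Measurable fun y => kern P.φ j y * diag P f g k (x - y) := fun k =>
    (kern_continuous P.φ j).measurable.mul
      ((diag_measurable P f g k).comp (measurable_const.sub measurable_id))
  refine integral_tsum (fun k => (hm k).aestronglyMeasurable) ?_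
  rw [← lintegral_tsum fun k => (hm k).enorm.aemeasurable]
  set M := (∫⁻ ξ, ‖FourierTransform.fourier f ξ‖ₑ) *
      (5 * ∫⁻ ξ, ‖FourierTransform.fourier g ξ‖ₑ) with hM
  have hMt : M ≠ ∞ := ENNReal.mul_ne_top (lintegral_fourier_ne_top f)
    (ENNReal.mul_ne_top (by simp) (lintegral_fourier_ne_top g))
  have : ∫⁻ y, ∑' k, ‖kern P.φ j y * diag P f g k (x - y)‖ₑ
      ≤ (∫⁻ y, ‖kern P.φ j y‖ₑ) * M := by
    rw [← lintegral_mul_const _ (kern_continuous P.φ j).measurable.enorm]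
    refine lintegral_mono fun y => ?_
    simp_rw [enorm_mul]
    rw [ENNReal.tsum_mul_left]
    gcongr
    exact tsum_diag_le P f g (x - y)
  exact (this.trans_lt (ENNReal.mul_lt_top (kern_integrable P.φ j).2 hMt.lt_top)).ne

lemma LP_diag_eq_zero {d : ℕ} (P : LPData d) (f g : SchwartzMap (Rd d) ℂ) {j k : ℤ}
    (hjk : k + 5 ≤ j) (x : Rd d) : LP P j (diag P f g k) x = 0 := by
  rw [LP_eq]
  unfold diag
  simp_rw [Finset.mul_sum]
  rw [integral_finsetSum]
  · refine Finset.sum_eq_zero fun m hm => ?_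
    exact LP_mul_eq_zero P hjk (by linarith [(Finset.mem_Icc.1 hm).2]) f g x
  · intro m _
    have hb : ∀ y, ‖LP P k f y * LP P (k + m) g y‖ₑ ≤
        (∫⁻ ξ, ‖FourierTransform.fourier f ξ‖ₑ) * ∫⁻ ξ, ‖FourierTransform.fourier g ξ‖ₑ := by
      intro y
      rw [enorm_mul]
      gcongr
      · exact (ENNReal.le_tsum k).trans (tsum_LP_le P f y)
      · exact (ENNReal.le_tsum (k + m)).trans (tsum_LP_le P g y)
    have hMt := ENNReal.mul_ne_top (lintegral_fourier_ne_top f) (lintegral_fourier_ne_top g)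
    refine (kern_integrable P.φ j).mul_bdd (c := ENNReal.toReal
      ((∫⁻ ξ, ‖FourierTransform.fourier f ξ‖ₑ) * ∫⁻ ξ, ‖FourierTransform.fourier g ξ‖ₑ))
      ?_ (ae_of_all _ fun y => ?_)
    · refine Measurable.aestronglyMeasurable ?_
      exact ((LP_stronglyMeasurable P k f.continuous.measurable).measurable.comp
        (measurable_const.sub measurable_id)).mul
        ((LP_stronglyMeasurable P (k + m) g.continuous.measurable).measurable.comp
        (measurable_const.sub measurable_id))
    · rw [← toReal_enorm]
      exact ENNReal.toReal_mono hMt (hb _)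

/-- Only the diagonal pieces `k ≥ j - 4` contribute to the block of frequency `2^j` of the
remainder, and each is estimated by Young and Cauchy–Schwarz. -/
lemma eLpNorm_LP_remainder_le {d : ℕ} (P : LPData d) (f g : SchwartzMap (Rd d) ℂ) (j : ℤ) :
    eLpNorm (LP P j fun x => ∑' k : ℤ, ∑' ℓ : {m : ℤ // |k - m| ≤ 2},
        LP P k f x * LP P (ℓ : ℤ) g x) 1 volume
      ≤ eLpNorm P.φ 1 volume * ∑' i : ℕ, ∑ m ∈ Finset.Icc (-2 : ℤ) 2,
        eLpNorm (LP P (j - 4 + i) f) 2 volume * eLpNorm (LP P (j - 4 + i + m) g) 2 volume := by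
  simp_rw [tsum_near_eq_diag]
  have hmeas : ∀ k, Measurable fun x => ‖LP P j (diag P f g k) x‖ₑ := fun k =>
    (LP_stronglyMeasurable P j (diag_measurable P f g k)).measurable.enorm
  have h1 : eLpNorm (LP P j fun x => ∑' k, diag P f g k x) 1 volume
      ≤ ∑' k, eLpNorm (LP P j (diag P f g k)) 1 volume := by
    simp only [eLpNorm_one_eq_lintegral_enorm]
    rw [← lintegral_tsum fun k => (hmeas k).aemeasurable]
    refine lintegral_mono fun x => ?_
    rw [LP_tsum_diag]
    exact enorm_tsum_le_tsum_enorm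
  have hinj : Function.Injective fun i : ℕ => j - 4 + (i : ℤ) := by
    intro a b hab
    simpa using hab
  refine h1.trans ?_
  rw [← hinj.tsum_eq, ← ENNReal.tsum_mul_left]
  · refine ENNReal.tsum_le_tsum fun i => ?_
    refine (eLpNorm_one_LP_le P j (diag_measurable P f g _)).trans ?_
    gcongr
    have e : diag P f g (j - 4 + i) = ∑ m ∈ Finset.Icc (-2 : ℤ) 2,
        LP P (j - 4 + i) f • LP P (j - 4 + i + m) g := by
      ext x; simp [diag, Finset.sum_apply]
    rw [e]
    have hms : ∀ (k : ℤ) (w : SchwartzMap (Rd d) ℂ), AEStronglyMeasurable (LP P k w) volume :=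
      fun k w => (LP_stronglyMeasurable P k w.continuous.measurable).aestronglyMeasurable
    refine (eLpNorm_sum_le (fun m _ => (hms _ _).smul (hms _ _)) le_rfl).trans ?_
    exact Finset.sum_le_sum fun m _ => eLpNorm_smul_le_mul_eLpNorm (hms _ _) (hms _ _)
  · intro k hk
    by_contra hn
    apply hk
    have hlt : k + 5 ≤ j := by
      by_contra hlt
      exact hn ⟨(k - (j - 4)).toNat, by
        simp only [Int.ofNat_toNat]; rw [max_eq_left (by linarith)]; ring⟩
    have : LP P j (diag P f g k) = 0 := funext fun x => LP_diag_eq_zero P f g hlt x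
    simp [this]

lemma aemeasurable_eLpNorm_LP {d : ℕ} (P : LPData d) (k : ℤ) {p : ℝ≥0∞} (hp0 : p ≠ 0)
    (hpt : p ≠ ∞) {f : ℝ → Rd d → ℂ} (hf : SliceSchwartz f) :
    AEMeasurable (fun t => eLpNorm (LP P k (f t)) p volume) (volume.restrict (Set.Ioi 0)) := by
  classical
  -- extend by zero to negative times to get a globally measurable function
  let F : Rd d × ℝ → ℂ := (Set.univ ×ˢ Set.Ioi (0:ℝ)).indicator fun z => f z.2 z.1
  have hS : MeasurableSet ((Set.univ : Set (Rd d)) ×ˢ Set.Ioi (0:ℝ)) :=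
    MeasurableSet.univ.prod measurableSet_Ioi
  have hF : Measurable F := by
    have := hf.1.measurable_piecewise (s := (Set.univ : Set (Rd d)) ×ˢ Set.Ioi (0:ℝ))
      (g := (0 : Rd d × ℝ → ℂ)) continuousOn_const hS
    rwa [Set.piecewise_eq_indicator] at this
  have hG : StronglyMeasurable fun z : ℝ × Rd d =>
      ∫ y, kern P.φ k y * F (z.2 - y, z.1) := by
    refine StronglyMeasurable.integral_prod_right
      (f := fun (z : ℝ × Rd d) (y : Rd d) => kern P.φ k y * F (z.2 - y, z.1)) ?_
    refine Measurable.stronglyMeasurable ?_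
    unfold Function.uncurry
    have hk := (kern_continuous P.φ k).measurable
    exact (hk.comp measurable_snd).mul (hF.comp (by fun_prop))
  have hN : Measurable fun t : ℝ =>
      (∫⁻ x, ‖∫ y, kern P.φ k y * F (x - y, t)‖ₑ ^ p.toReal) ^ (1 / p.toReal) := by
    refine Measurable.pow_const ?_ _
    exact (hG.measurable.enorm.pow_const _).lintegral_prod_right
  refine ⟨_, hN, ?_⟩
  filter_upwards [ae_restrict_mem measurableSet_Ioi] with t ht
  rw [eLpNorm_eq_lintegral_rpow_enorm_toReal hp0 hpt]
  congr 2; ext x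
  congr 2
  rw [LP_eq]
  congr 1; ext y
  congr 1
  exact (Set.indicator_of_mem (show (x - y, t) ∈ Set.univ ×ˢ Set.Ioi (0:ℝ) from
    ⟨Set.mem_univ _, ht⟩) (fun z : Rd d × ℝ => f z.2 z.1)).symm

/-! ### Integration in time -/

/-- The block of frequency `2^j` of the remainder in `L^{Q/2}_t L^1_x`. -/
lemma LqLp_remainder_le {d : ℕ} (P : LPData d) {p Q : ℝ≥0∞} (hp1 : 1 ≤ p) (hp2 : p ≤ 2)
    (hQ : 2 ≤ Q) :
    ∃ K : ℝ≥0∞, K ≠ ∞ ∧ ∀ f g : ℝ → Rd d → ℂ, SliceSchwartz f → SliceSchwartz g → ∀ j : ℤ,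
      LqLp (Q / 2) 1 (fun t => LP P j fun x => ∑' k : ℤ, ∑' ℓ : {m : ℤ // |k - m| ≤ 2},
          LP P k (f t) x * LP P (ℓ : ℤ) (g t) x)
        ≤ ∑' i : ℕ, ∑ m ∈ Finset.Icc (-2 : ℤ) 2,
          K * ENNReal.ofReal ((2:ℝ) ^ ((d:ℝ) * ((1 / p).toReal - 1 / 2) *
            ((2 * (j - 4 + i) + m : ℤ) : ℝ))) *
          (LqLp Q p (fun t => LP P (j - 4 + i) (f t)) *
            LqLp Q p (fun t => LP P (j - 4 + i + m) (g t))) := by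
  obtain ⟨B, hB, hbern⟩ := LP_bernstein P hp1 hp2
  have hpt : p ≠ ∞ := (hp2.trans_lt (by simp)).ne
  have hp0 : p ≠ 0 := (zero_lt_one.trans_le hp1).ne'
  have hQ0 : Q ≠ 0 := (zero_lt_two.trans_le hQ).ne'
  have hQ1 : 1 ≤ Q / 2 := by
    rw [ENNReal.le_div_iff_mul_le (by simp) (by simp)]; simpa using hQ
  have hQ20 : Q / 2 ≠ 0 := (zero_lt_one.trans_le hQ1).ne'
  have hφ : eLpNorm P.φ 1 volume ≠ ∞ := (P.φ.memLp 1 volume).eLpNorm_ne_top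
  refine ⟨eLpNorm P.φ 1 volume * (B * B), ENNReal.mul_ne_top hφ (ENNReal.mul_ne_top hB hB),
    fun f g hf hg j => ?_⟩
  set δ : ℝ := (d:ℝ) * ((1 / p).toReal - 1 / 2) with hδ
  set K := eLpNorm P.φ 1 volume * (B * B) with hK
  have hKt : K ≠ ∞ := ENNReal.mul_ne_top hφ (ENNReal.mul_ne_top hB hB)
  set c : ℕ → ℤ → ℝ≥0∞ := fun i m =>
    K * ENNReal.ofReal ((2:ℝ) ^ (δ * ((2 * (j - 4 + i) + m : ℤ) : ℝ))) with hc
  have hct : ∀ i m, c i m ≠ ∞ := fun i m => ENNReal.mul_ne_top hKt ENNReal.ofReal_ne_top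
  set A : ℤ → ℝ → ℝ≥0∞ := fun k t => eLpNorm (LP P k (f t)) p volume with hA
  set G : ℤ → ℝ → ℝ≥0∞ := fun k t => eLpNorm (LP P k (g t)) p volume with hG
  have hAm : ∀ k, AEMeasurable (A k) (volume.restrict (Set.Ioi 0)) := fun k =>
    aemeasurable_eLpNorm_LP P k hp0 hpt hf
  have hGm : ∀ k, AEMeasurable (G k) (volume.restrict (Set.Ioi 0)) := fun k =>
    aemeasurable_eLpNorm_LP P k hp0 hpt hg
  have hpow : ∀ k l : ℤ, ENNReal.ofReal ((2:ℝ) ^ (δ * (k:ℝ))) * ENNReal.ofReal ((2:ℝ) ^ (δ * (l:ℝ)))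
      = ENNReal.ofReal ((2:ℝ) ^ (δ * ((k + l : ℤ) : ℝ))) := by
    intro k l
    rw [← ENNReal.ofReal_mul (by positivity), ← Real.rpow_add (by norm_num)]
    push_cast
    rw [mul_add]
  have hpt : ∀ t : ℝ, 0 < t → eLpNorm (LP P j fun x => ∑' k : ℤ,
      ∑' ℓ : {m : ℤ // |k - m| ≤ 2}, LP P k (f t) x * LP P (ℓ : ℤ) (g t) x) 1 volume
      ≤ ∑' i : ℕ, ∑ m ∈ Finset.Icc (-2 : ℤ) 2,
        c i m * (A (j - 4 + i) t * G (j - 4 + i + m) t) := by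
    intro t ht
    obtain ⟨f', hf'⟩ := hf.2 t ht
    obtain ⟨g', hg'⟩ := hg.2 t ht
    simp only [hA, hG, hf', hg']
    refine (eLpNorm_LP_remainder_le P f' g' j).trans ?_
    rw [← ENNReal.tsum_mul_left]
    refine ENNReal.tsum_le_tsum fun i => ?_
    rw [Finset.mul_sum]
    refine Finset.sum_le_sum fun m _ => ?_
    refine (mul_le_mul_right (mul_le_mul' (hbern _ f') (hbern _ g')) _).trans (le_of_eq ?_)
    have e : (2 * (j - 4 + i) + m : ℤ) = (j - 4 + i) + (j - 4 + i + m) := by ring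
    simp only [hc, hK]
    rw [e, ← hpow (j - 4 + i) (j - 4 + i + m)]
    ring
  rw [LqLp_eq_eLpNorm hQ20]
  have hle : eLpNorm (fun t => eLpNorm (LP P j fun x => ∑' k : ℤ,
      ∑' ℓ : {m : ℤ // |k - m| ≤ 2}, LP P k (f t) x * LP P (ℓ : ℤ) (g t) x) 1 volume) (Q / 2)
        (volume.restrict (Set.Ioi 0))
      ≤ eLpNorm (fun t => ∑' i : ℕ, (∑ m ∈ Finset.Icc (-2 : ℤ) 2,
        fun t => c i m * (A (j - 4 + i) t * G (j - 4 + i + m) t)) t) (Q / 2)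
        (volume.restrict (Set.Ioi 0)) := by
    refine eLpNorm_mono_enorm_ae ?_
    filter_upwards [ae_restrict_mem measurableSet_Ioi] with t ht
    simpa only [enorm_eq_self, Finset.sum_apply] using hpt t ht
  have hm : ∀ (i : ℕ) (m : ℤ), AEMeasurable
      (fun t => c i m * (A (j - 4 + i) t * G (j - 4 + i + m) t))
      (volume.restrict (Set.Ioi 0)) := fun i m => ((hAm _).mul (hGm _)).const_mul _
  refine hle.trans ((eLpNorm_tsum_le_tsum hQ1 fun i =>
    Finset.aemeasurable_sum _ fun m _ => hm i m).trans ?_)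
  refine ENNReal.tsum_le_tsum fun i => ?_
  refine (eLpNorm_sum_le (fun m _ => (hm i m).aestronglyMeasurable) hQ1).trans ?_
  refine Finset.sum_le_sum fun m _ => ?_
  rw [eLpNorm_const_mul_ennreal hQ20 (hct i m), LqLp_eq_eLpNorm hQ0, LqLp_eq_eLpNorm hQ0]
  gcongr
  exact eLpNorm_half_mul_le hQ0 (hAm _) (hGm _)

lemma tsum_two_rpow_ne_top {s : ℝ} (hs : 0 < s) :
    ∑' i : ℕ, ENNReal.ofReal ((2:ℝ) ^ (-s * (i:ℝ))) ≠ ∞ := by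
  have e : ∀ i : ℕ, ENNReal.ofReal ((2:ℝ) ^ (-s * (i:ℝ))) = ENNReal.ofReal ((2:ℝ) ^ (-s)) ^ i := by
    intro i
    rw [Real.rpow_mul (by norm_num), Real.rpow_natCast, ENNReal.ofReal_pow (by positivity)]
  simp_rw [e]
  rw [ENNReal.tsum_geometric]
  have : ENNReal.ofReal ((2:ℝ) ^ (-s)) < 1 := by
    rw [ENNReal.ofReal_lt_one]
    exact Real.rpow_lt_one_of_one_lt_of_neg (by norm_num) (by linarith)
  exact ENNReal.inv_ne_top.2 (pos_iff_ne_zero.1 (tsub_pos_of_lt this))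

/-- Remainder estimate, case `1 ≤ p ≤ 2`, `2 ≤ Q ≤ ∞`,
`n - 3 + 2/Q > 0`:
`‖R(f,g)‖_{L̃^{Q/2}(Ḃ^{n-3+2/Q}_{1,r})}
  ≤ C ‖f‖_{L̃^{Q}(Ḃ^{(n-1)/p+1/Q-1}_{p,r})} ‖g‖_{L̃^{Q}(Ḃ^{(n-1)/p+1/Q-1}_{p,r})}`. -/
theorem remainder_estimate_chemin_lerner_low_p (n : ℕ) (hn : 3 ≤ n) (P : LPData (n-1))
    (p Q r : ℝ≥0∞) (hp1 : 1 ≤ p) (hp2 : p ≤ 2) (hQ : 2 ≤ Q) (hr : 1 ≤ r)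
    (hpos : 0 < (n:ℝ) - 3 + 2 * (1/Q).toReal) :
    ∃ C > (0:ℝ), ∀ f g : ℝ → Rd (n-1) → ℂ, SliceSchwartz f → SliceSchwartz g →
      (∀ t : ℝ, 0 < t → ∀ x : Rd (n-1),
        Summable fun z : ℤ × ℤ =>
          if |z.1 - z.2| ≤ 2 then ‖LP P z.1 (f t) x * LP P z.2 (g t) x‖ else 0) →
      CL P ((n:ℝ) - 3 + 2 * (1/Q).toReal) (Q / 2) 1 r
          (fun t x => ∑' k : ℤ, ∑' ℓ : {m : ℤ // |k - m| ≤ 2},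
            LP P k (f t) x * LP P (ℓ : ℤ) (g t) x)
        ≤ ENNReal.ofReal C *
            CL P (((n:ℝ) - 1) * (1/p).toReal + (1/Q).toReal - 1) Q p r f *
            CL P (((n:ℝ) - 1) * (1/p).toReal + (1/Q).toReal - 1) Q p r g := by
  obtain ⟨K, hK, hest⟩ := LqLp_remainder_le P hp1 hp2 hQ
  set s : ℝ := (n:ℝ) - 3 + 2 * (1/Q).toReal with hs
  set σ : ℝ := ((n:ℝ) - 1) * (1/p).toReal + (1/Q).toReal - 1 with hσ
  set w : ℕ → ℝ≥0∞ := fun i => ENNReal.ofReal ((2:ℝ) ^ (-s * (i:ℝ))) with hw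
  set L : ℝ≥0∞ := K * ENNReal.ofReal ((2:ℝ) ^ (5 * s)) with hL
  have hLt : L ≠ ∞ := ENNReal.mul_ne_top hK ENNReal.ofReal_ne_top
  have hCt : L * (5 * ∑' i, w i) ≠ ∞ :=
    ENNReal.mul_ne_top hLt (ENNReal.mul_ne_top (by simp) (tsum_two_rpow_ne_top hpos))
  refine ⟨(L * (5 * ∑' i, w i)).toReal + 1, by positivity, fun f g hf hg _ => ?_⟩
  have hC : L * (5 * ∑' i, w i) ≤ ENNReal.ofReal ((L * (5 * ∑' i, w i)).toReal + 1) := by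
    conv_lhs => rw [← ENNReal.ofReal_toReal hCt]
    exact ENNReal.ofReal_le_ofReal (by linarith)
  have hd : ((n - 1 : ℕ) : ℝ) = (n:ℝ) - 1 := by
    rw [Nat.cast_sub (by omega)]; simp
  unfold CL
  refine (ellNorm_sum_le hr hLt (w := w) (fun i => ENNReal.ofReal_ne_top)
    (a := fun j => ENNReal.ofReal ((2:ℝ) ^ (σ * (j:ℝ))) * LqLp Q p fun t => LP P j (f t))
    (b := fun j => ENNReal.ofReal ((2:ℝ) ^ (σ * (j:ℝ))) * LqLp Q p fun t => LP P j (g t))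
    fun j => ?_).trans ?_
  · refine (mul_le_mul_right (hest f g hf hg j) _).trans ?_
    rw [← ENNReal.tsum_mul_left, ← ENNReal.tsum_mul_left]
    refine ENNReal.tsum_le_tsum fun i => ?_
    simp only [Finset.mul_sum]
    refine Finset.sum_le_sum fun m hm => ?_
    have hm2 : (-2 : ℝ) ≤ m := by exact_mod_cast (Finset.mem_Icc.1 hm).1
    -- with `l = k + m` and `k = j - 4 + i`, the exponents differ by `s (1 + m / 2) ≥ 0`
    have hexp : ENNReal.ofReal ((2:ℝ) ^ (s * (j:ℝ))) *
        ENNReal.ofReal ((2:ℝ) ^ (((n - 1 : ℕ) : ℝ) * ((1 / p).toReal - 1 / 2) *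
          ((2 * (j - 4 + i) + m : ℤ) : ℝ)))
        ≤ ENNReal.ofReal ((2:ℝ) ^ (5 * s)) * ENNReal.ofReal ((2:ℝ) ^ (-s * (i:ℝ))) *
          (ENNReal.ofReal ((2:ℝ) ^ (σ * ((j - 4 + i : ℤ) : ℝ))) *
            ENNReal.ofReal ((2:ℝ) ^ (σ * ((j - 4 + i + m : ℤ) : ℝ)))) := by
      simp only [← ENNReal.ofReal_mul (Real.rpow_nonneg (zero_le_two : (0:ℝ) ≤ 2) _),
        ← Real.rpow_add (zero_lt_two' ℝ)]
      refine ENNReal.ofReal_le_ofReal (Real.rpow_le_rpow_of_exponent_le (by norm_num) ?_)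
      have hdiff : 5 * s + -s * (i:ℝ) + (σ * ((j - 4 + i : ℤ) : ℝ) +
          σ * ((j - 4 + i + m : ℤ) : ℝ)) - (s * (j:ℝ) + ((n - 1 : ℕ) : ℝ) *
          ((1 / p).toReal - 1 / 2) * ((2 * (j - 4 + i) + m : ℤ) : ℝ)) = s * (1 + m / 2) := by
        rw [hd, hs, hσ]
        push_cast
        ring
      have : 0 ≤ s * (1 + m / 2) := mul_nonneg hpos.le (by linarith)
      linarith
    set X := LqLp Q p fun t => LP P (j - 4 + i) (f t)
    set Y := LqLp Q p fun t => LP P (j - 4 + i + m) (g t)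
    calc _ = (ENNReal.ofReal ((2:ℝ) ^ (s * (j:ℝ))) *
        ENNReal.ofReal ((2:ℝ) ^ (((n - 1 : ℕ) : ℝ) * ((1 / p).toReal - 1 / 2) *
          ((2 * (j - 4 + i) + m : ℤ) : ℝ)))) * (K * (X * Y)) := by ring
      _ ≤ _ := mul_le_mul_left hexp _
      _ = _ := by simp only [hL, hw]; ring
  · gcongr
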